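/- arXiv:1005.5696 — 2 statements merged into one kernel-verified Lean document; each statement's English description precedes it below -/
import Mathlib

section
/- Let $\mathcal{A},\mathcal{B}$ be sub-$\sigma$-algebras of a probability space with strong mixing coefficient $\alpha = \sup\{|\mathbb{P}(A\cap B)-\mathbb{P}(A)\mathbb{P}(B)|\}$. Let $p>1$ and $q$ with $1/p+1/q=1$. If $f$ is $\mathcal{A}$-measurable with $\mathbb{E}|f|^p<\infty$ and $g$ is $\mathcal{B}$-measurable with $|g|\le C$ a.s., then $|\mathbb{E}[fg]-\mathbb{E}[f]\mathbb{E}[g]| \le 6 C\, (\mathbb{E}|f|^p)^{1/p}\, \alpha^{1/q}$. -/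
open MeasureTheory

/-!
The covariance is `∫ f h` with `h = 𝔼[g - 𝔼 g | mA]`, so Hölder's inequality bounds it by
`‖f‖_p ‖h‖_q`. Here `|h| ≤ 2C` almost surely, and `∫ |h| ≤ 4Cα`: the `L¹` norm of a conditional
expectation of a centred variable is twice the integral of that variable over a conditioning event
(`exists_integral_abs_condExp_eq`). Used for `h` this produces an event `A ∈ mA`; used again for
`𝔼[1_A - ℙ(A) | mB]` it produces an event `B ∈ mB` and reduces the estimate to the covariance of
`1_A` and `1_B` (`integral_abs_condExp_le`). Interpolating,
`∫ |h|^q ≤ (2C)^(q-1) * 4Cα = (2C)^q * 2α`, hence `‖h‖_q ≤ 2C (2α)^(1/q) ≤ 4C α^(1/q)`, so the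
argument gives the inequality with `4` in place of `6`.
-/

/-- The event is `{0 ≤ 𝔼[u | m]}`; centring makes the negative part contribute as much as the
positive part. -/
lemma exists_integral_abs_condExp_eq {Ω : Type*} {m0 : MeasurableSpace Ω} (μ : Measure Ω)
    [IsProbabilityMeasure μ] (m : MeasurableSpace Ω) (hm : m ≤ m0) (u : Ω → ℝ)
    (hu : Integrable u μ) (hu0 : ∫ ω, u ω ∂μ = 0) :
    ∃ S : Set Ω, MeasurableSet[m] S ∧ ∫ ω, |(μ[u|m]) ω| ∂μ = 2 * ∫ ω in S, u ω ∂μ := by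
  have hS : MeasurableSet[m] {ω | 0 ≤ (μ[u|m]) ω} :=
    stronglyMeasurable_condExp.measurable measurableSet_Ici
  set S := {ω | 0 ≤ (μ[u|m]) ω} with hSdef
  refine ⟨S, hS, ?_⟩
  have hi : Integrable (μ[u|m]) μ := integrable_condExp
  rw [← integral_add_compl (hm _ hS) hi.abs]
  have h1 : ∫ ω in S, |(μ[u|m]) ω| ∂μ = ∫ ω in S, u ω ∂μ := by
    rw [← setIntegral_condExp hm hu hS]
    exact setIntegral_congr_fun (hm _ hS) fun ω hω => abs_of_nonneg hω
  have h2 : ∫ ω in Sᶜ, |(μ[u|m]) ω| ∂μ = - ∫ ω in Sᶜ, u ω ∂μ := by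
    rw [← setIntegral_condExp hm hu hS.compl, ← integral_neg]
    refine setIntegral_congr_fun (hm _ hS.compl) fun ω hω => abs_of_neg ?_
    simpa [hSdef] using hω
  have h3 := integral_add_compl (hm _ hS) hu
  rw [h1, h2]
  linarith

lemma integral_mul_condExp_eq {Ω : Type*} {m0 : MeasurableSpace Ω} (μ : Measure Ω)
    [IsProbabilityMeasure μ] (m : MeasurableSpace Ω) (hm : m ≤ m0) (v u : Ω → ℝ)
    (hv : Measurable[m] v) (hu : Integrable u μ) (hvu : Integrable (v * u) μ) :
    ∫ ω, v ω * (μ[u|m]) ω ∂μ = ∫ ω, v ω * u ω ∂μ := by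
  have h := condExp_mul_of_stronglyMeasurable_left (m := m) hv.stronglyMeasurable hvu hu
  calc ∫ ω, v ω * (μ[u|m]) ω ∂μ = ∫ ω, (μ[v * u|m]) ω ∂μ :=
        (integral_congr_ae h).symm
    _ = _ := integral_condExp hm

/-- The `L¹` estimate `𝔼|𝔼[g | mA] - 𝔼 g| ≤ 4Cα` for `|g| ≤ C`. -/
lemma integral_abs_condExp_le {Ω : Type*} {m0 : MeasurableSpace Ω} (μ : Measure Ω)
    [IsProbabilityMeasure μ] (mA mB : MeasurableSpace Ω) (hmA : mA ≤ m0) (hmB : mB ≤ m0)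
    (α C : ℝ) (hC : 0 ≤ C)
    (hα : ∀ A B : Set Ω, MeasurableSet[mA] A → MeasurableSet[mB] B →
      |(μ (A ∩ B)).toReal - (μ A).toReal * (μ B).toReal| ≤ α)
    (g : Ω → ℝ) (hg : Measurable[mB] g) (hgi : Integrable g μ) (hgb : ∀ᵐ ω ∂μ, |g ω| ≤ C) :
    ∫ ω, |(μ[fun ω => g ω - ∫ x, g x ∂μ|mA]) ω| ∂μ ≤ 4 * C * α := by
  obtain ⟨A, hA, hAe⟩ := exists_integral_abs_condExp_eq μ mA hmA
    (fun ω => g ω - ∫ x, g x ∂μ) (hgi.sub (integrable_const _))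
    (by rw [integral_sub hgi (integrable_const _)]; simp)
  have hind : Integrable (A.indicator (fun _ => (1 : ℝ))) μ :=
    (integrable_const 1).indicator (hmA _ hA)
  have hAint : ∫ ω, A.indicator (fun _ => (1 : ℝ)) ω ∂μ = μ.real A := by
    rw [integral_indicator (hmA _ hA)]; simp
  set w : Ω → ℝ := fun ω => A.indicator (fun _ => (1 : ℝ)) ω - μ.real A with hw
  have hwi : Integrable w μ := hind.sub (integrable_const _)
  have hgind : Integrable (fun ω => g ω * A.indicator (fun _ => (1 : ℝ)) ω) μ := by
    refine (hgi.indicator (hmA _ hA)).congr (ae_of_all _ fun ω => ?_)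
    by_cases h : ω ∈ A <;> simp [h]
  have hgw : Integrable (g * w) μ := by
    refine (hgind.sub (hgi.mul_const (μ.real A))).congr (ae_of_all _ fun ω => ?_)
    simp [hw, mul_sub]
  obtain ⟨B, hB, hBe⟩ := exists_integral_abs_condExp_eq μ mB hmB w hwi
    (by rw [hw, integral_sub hind (integrable_const _), hAint]; simp)
  -- The centring moves from `g` to the indicator of `A`.
  have h1 : ∫ ω in A, (g ω - ∫ x, g x ∂μ) ∂μ = ∫ ω, g ω * w ω ∂μ := by
    have e1 : ∫ ω, g ω * w ω ∂μ
        = ∫ ω, g ω * A.indicator (fun _ => (1 : ℝ)) ω ∂μ - (∫ ω, g ω ∂μ) * μ.real A := by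
      rw [← integral_mul_const, ← integral_sub hgind (hgi.mul_const _)]
      simp [hw, mul_sub]
    have e2 : ∫ ω, g ω * A.indicator (fun _ => (1 : ℝ)) ω ∂μ = ∫ ω in A, g ω ∂μ := by
      rw [← integral_indicator (hmA _ hA)]
      refine integral_congr_ae (ae_of_all _ fun ω => ?_)
      by_cases h : ω ∈ A <;> simp [h]
    rw [e1, e2, integral_sub hgi.integrableOn (integrable_const _)]
    simp [mul_comm]
  have h2 : ∫ ω, g ω * w ω ∂μ ≤ C * ∫ ω, |(μ[w|mB]) ω| ∂μ := by
    rw [← integral_mul_condExp_eq μ mB hmB g w hg hwi hgw, ← integral_const_mul]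
    have hci : Integrable (μ[w|mB]) μ := integrable_condExp
    refine integral_mono_ae
      (hci.bdd_mul (hg.mono hmB le_rfl).aestronglyMeasurable hgb) (hci.abs.const_mul C) ?_
    filter_upwards [hgb] with ω hω
    calc g ω * (μ[w|mB]) ω ≤ |g ω * (μ[w|mB]) ω| := le_abs_self _
      _ = |g ω| * |(μ[w|mB]) ω| := abs_mul _ _
      _ ≤ C * |(μ[w|mB]) ω| := by gcongr
  have h3 : ∫ ω in B, w ω ∂μ ≤ α := by
    have : ∫ ω in B, w ω ∂μ = (μ (A ∩ B)).toReal - (μ A).toReal * (μ B).toReal := by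
      rw [hw, integral_sub hind.integrableOn (integrable_const _),
        setIntegral_indicator (hmA _ hA)]
      simp [Measure.real, Set.inter_comm, mul_comm]
    rw [this]
    exact (le_abs_self _).trans (hα A B hA hB)
  rw [hAe, h1]
  rw [hBe] at h2
  nlinarith [mul_le_mul_of_nonneg_left h3 hC]

/-- Davydov's Lemma 2.1: covariance inequality when `f ∈ Lᵖ` and `g` is bounded. -/
theorem covariance_le_of_Lp_bounded_mixing
    {Ω : Type*} {m0 : MeasurableSpace Ω} (μ : Measure Ω) [IsProbabilityMeasure μ]
    (mA mB : MeasurableSpace Ω) (hmA : mA ≤ m0) (hmB : mB ≤ m0)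
    (α C : ℝ) (hα0 : 0 ≤ α)
    (hα : ∀ A B : Set Ω, MeasurableSet[mA] A → MeasurableSet[mB] B →
      |(μ (A ∩ B)).toReal - (μ A).toReal * (μ B).toReal| ≤ α)
    (p q : ℝ) (hp : 1 < p) (hpq : 1 / p + 1 / q = 1)
    (f g : Ω → ℝ) (hf : Measurable[mA] f) (hg : Measurable[mB] g)
    (hfp : Integrable (fun ω => |f ω| ^ p) μ)
    (hgb : ∀ᵐ ω ∂μ, |g ω| ≤ C) :
    |(∫ ω, f ω * g ω ∂μ) - (∫ ω, f ω ∂μ) * ∫ ω, g ω ∂μ| ≤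
      6 * C * (∫ ω, |f ω| ^ p ∂μ) ^ (1 / p) * α ^ (1 / q) := by
  have hC : 0 ≤ C := by
    obtain ⟨ω, hω⟩ := hgb.exists
    exact (abs_nonneg _).trans hω
  have hconj : p.HolderConjugate q :=
    Real.holderConjugate_iff.2 ⟨hp, by simpa [one_div] using hpq⟩
  have hq : 1 < q := hconj.symm.lt
  have hp0 : 0 < p := by linarith
  have hq0 : 0 < q := by linarith
  have hfm : AEStronglyMeasurable[m0] f μ := (hf.mono hmA le_rfl).aestronglyMeasurable
  have hgm : AEStronglyMeasurable[m0] g μ := (hg.mono hmB le_rfl).aestronglyMeasurable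
  have hfL : MemLp f (ENNReal.ofReal p) μ := by
    rw [← integrable_norm_rpow_iff hfm (by simpa using hp0) ENNReal.ofReal_ne_top,
      ENNReal.toReal_ofReal hp0.le]
    exact hfp
  have hfi : Integrable f μ := hfL.integrable (by simpa using hp.le)
  have hgi : Integrable g μ := Integrable.of_bound hgm C hgb
  have hfg : Integrable (fun ω => f ω * g ω) μ := hfi.mul_bdd hgm hgb
  set u : Ω → ℝ := fun ω => g ω - ∫ x, g x ∂μ with hu
  have hui : Integrable u μ := hgi.sub (integrable_const _)
  have hfu : Integrable (f * u) μ := by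
    refine (hfg.sub (hfi.mul_const (∫ x, g x ∂μ))).congr (ae_of_all _ fun ω => ?_)
    simp [hu, mul_sub]
  have hcov : (∫ ω, f ω * g ω ∂μ) - (∫ ω, f ω ∂μ) * ∫ ω, g ω ∂μ
      = ∫ ω, f ω * (μ[u|mA]) ω ∂μ := by
    rw [integral_mul_condExp_eq μ mA hmA f u hf hui hfu, ← integral_mul_const,
      ← integral_sub hfg (hfi.mul_const _)]
    simp [hu, mul_sub]
  have hL1 : ∫ ω, |(μ[u|mA]) ω| ∂μ ≤ 4 * C * α :=
    integral_abs_condExp_le μ mA mB hmA hmB α C hC hα g hg hgi hgb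
  set h : Ω → ℝ := μ[u|mA] with hh
  have hhi : Integrable h μ := integrable_condExp
  have hub : ∀ᵐ ω ∂μ, |u ω| ≤ 2 * C := by
    have hE : |∫ x, g x ∂μ| ≤ C := by
      simpa using norm_integral_le_of_norm_le_const (μ := μ) (f := g) (C := C) hgb
    filter_upwards [hgb] with ω hω
    have := abs_sub (g ω) (∫ x, g x ∂μ)
    simp only [hu]
    linarith
  have hhb : ∀ᵐ ω ∂μ, |h ω| ≤ 2 * C :=
    ae_bdd_abs_condExp_of_ae_bdd_abs hub
  have hhL : MemLp h (ENNReal.ofReal q) μ :=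
    MemLp.of_bound hhi.aestronglyMeasurable (2 * C) hhb
  have hhq : Integrable (fun ω => |h ω| ^ q) μ := by
    have := hhL.integrable_norm_rpow (by simpa using hq0) ENNReal.ofReal_ne_top
    rwa [ENNReal.toReal_ofReal hq0.le] at this
  have hHolder : |∫ ω, f ω * h ω ∂μ|
      ≤ (∫ ω, |f ω| ^ p ∂μ) ^ (1 / p) * (∫ ω, |h ω| ^ q ∂μ) ^ (1 / q) := by
    refine (abs_integral_le_integral_abs).trans ?_
    simp only [abs_mul]
    exact integral_mul_norm_le_Lp_mul_Lq hconj hfL hhL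
  have hsplit : ∀ x : ℝ, 0 ≤ x → x ^ q = x ^ (q - 1) * x := fun x hx => by
    have := Real.rpow_add_one' hx (y := q - 1) (by linarith)
    rwa [sub_add_cancel] at this
  have hq1 : ∫ ω, |h ω| ^ q ∂μ ≤ (2 * C) ^ q * (2 * α) := by
    calc ∫ ω, |h ω| ^ q ∂μ ≤ ∫ ω, (2 * C) ^ (q - 1) * |h ω| ∂μ := by
          refine integral_mono_ae hhq (hhi.abs.const_mul _) ?_
          filter_upwards [hhb] with ω hω
          rw [hsplit _ (abs_nonneg _)]
          exact mul_le_mul_of_nonneg_right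
            (Real.rpow_le_rpow (abs_nonneg _) hω (by linarith)) (abs_nonneg _)
      _ = (2 * C) ^ (q - 1) * ∫ ω, |h ω| ∂μ := integral_const_mul _ _
      _ ≤ (2 * C) ^ (q - 1) * (4 * C * α) := by gcongr
      _ = (2 * C) ^ q * (2 * α) := by rw [hsplit (2 * C) (by positivity)]; ring
  have hLq : (∫ ω, |h ω| ^ q ∂μ) ^ (1 / q) ≤ 4 * C * α ^ (1 / q) := by
    have h2 : (2 : ℝ) ^ (1 / q) ≤ 2 := by
      refine Real.rpow_le_self_of_one_le one_le_two ?_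
      rw [div_le_one hq0]
      exact hq.le
    calc (∫ ω, |h ω| ^ q ∂μ) ^ (1 / q) ≤ ((2 * C) ^ q * (2 * α)) ^ (1 / q) := by
          gcongr
      _ = 2 * C * (2 ^ (1 / q) * α ^ (1 / q)) := by
          rw [Real.mul_rpow (by positivity) (by positivity), Real.mul_rpow (by norm_num) hα0,
            ← Real.rpow_mul (by positivity), mul_one_div_cancel hq0.ne', Real.rpow_one]
      _ ≤ 2 * C * (2 * α ^ (1 / q)) := by gcongr
      _ = 4 * C * α ^ (1 / q) := by ring
  have hN : 0 ≤ (∫ ω, |f ω| ^ p ∂μ) ^ (1 / p) := by positivity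
  have hpos : 0 ≤ C * (∫ ω, |f ω| ^ p ∂μ) ^ (1 / p) * α ^ (1 / q) := by positivity
  rw [hcov]
  have := mul_le_mul_of_nonneg_left hLq hN
  linarith
end

section
/- Let $\mathcal{A},\mathcal{B}$ be sub-$\sigma$-algebras of a probability space with strong mixing coefficient $\alpha$. Let $p,q>1$ with $1/p+1/q<1$. If $f$ is $\mathcal{A}$-measurable with $\mathbb{E}|f|^p<\infty$ and $g$ is $\mathcal{B}$-measurable with $\mathbb{E}|g|^q<\infty$, then $|\mathbb{E}[fg]-\mathbb{E}[f]\mathbb{E}[g]| \le 12\,(\mathbb{E}|f|^p)^{1/p}(\mathbb{E}|g|^q)^{1/q}\,\alpha^{1-1/p-1/q}$. -/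
open MeasureTheory

/-!
The proof combines truncation with the covariance inequality for bounded functions.

For bounded functions, `|Cov(f, g)| ≤ 4 α M N` when `|f| ≤ M` and `|g| ≤ N`. Indeed
`Cov(f, g) = E[f h]` with `h = E[g | 𝒜] - E[g]`, so `|Cov(f, g)| ≤ M E|h|`; since `E[h] = 0`,
`E|h| = 2 E[h 1_A] = 2 Cov(1_A, g)` for `A = {h ≥ 0} ∈ 𝒜`. Repeating this with the roles of `f` and
`g` exchanged leaves `Cov(1_A, 1_B)`, which is at most `α` in absolute value
(`exists_abs_cov_le`, `abs_cov_le_of_bounded`).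

In general, normalise `‖f‖_p = ‖g‖_q = 1`, take `α > 0`, and set `θ = α ^ (1 - 1/p - 1/q)`.
Truncate `f` at height `α ^ (-1/p)` and `g` at height `α ^ (-1/q)`: the bounded inequality
contributes `4 θ`. Wherever the truncation changes the product `a b`, one of `α |a| ^ p`,
`α |b| ^ q` exceeds `1`, and then `|a b| ≤ θ (|a| ^ p + |b| ^ q)` pointwise (`mul_le_of_large`).
Integrating this over `μ` (for `E[f g]`) and over `μ ⊗ μ` (for `E[f] E[g]`) shows that each of the two
terms changes by at most `2 θ` (`abs_integral_mul_sub_trunc_le`, `abs_cov_sub_cov_trunc_le`). The total is `8 θ ≤ 12 θ`.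
The case `α = 0` follows by letting the mixing bound decrease to `0`.
-/

/-- If `g` is integrable and `f` is `mA`-measurable with `|f| ≤ M`, the covariance of `f` and `g` is
controlled by the covariance of `g` with the indicator of a single event of `mA`. -/
lemma exists_abs_cov_le {Ω : Type*} {m0 : MeasurableSpace Ω} (μ : Measure Ω)
    [IsProbabilityMeasure μ] (mA : MeasurableSpace Ω) (hmA : mA ≤ m0)
    (f g : Ω → ℝ) (M : ℝ) (hf : Measurable[mA] f) (hfM : ∀ ω, |f ω| ≤ M) (hg : Integrable g μ) :
    ∃ A : Set Ω, MeasurableSet[mA] A ∧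
      |(∫ ω, f ω * g ω ∂μ) - (∫ ω, f ω ∂μ) * ∫ ω, g ω ∂μ| ≤
        2 * M * |(∫ ω in A, g ω ∂μ) - (μ A).toReal * ∫ ω, g ω ∂μ| := by
  have hfs : StronglyMeasurable[mA] f := hf.stronglyMeasurable
  have hfi : Integrable f μ :=
    Integrable.of_bound (hfs.mono hmA).aestronglyMeasurable M (Filter.Eventually.of_forall hfM)
  have hfg : Integrable (fun ω => f ω * g ω) μ :=
    hg.bdd_mul (hfs.mono hmA).aestronglyMeasurable (Filter.Eventually.of_forall hfM)
  set c := ∫ ω, g ω ∂μ with hc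
  set h : Ω → ℝ := fun ω => (μ[g|mA]) ω - c with hh
  have hhs : StronglyMeasurable[mA] h := stronglyMeasurable_condExp.sub stronglyMeasurable_const
  have hhi : Integrable h μ := integrable_condExp.sub (integrable_const c)
  have hpull : ∫ ω, f ω * g ω ∂μ = ∫ ω, f ω * (μ[g|mA]) ω ∂μ := by
    rw [← integral_condExp hmA (f := fun ω => f ω * g ω)]
    exact integral_congr_ae (condExp_mul_of_stronglyMeasurable_left hfs hfg hg)
  have hcov : (∫ ω, f ω * g ω ∂μ) - (∫ ω, f ω ∂μ) * c = ∫ ω, f ω * h ω ∂μ := by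
    rw [hpull, ← integral_mul_const, ← integral_sub]
    · simp only [hh, mul_sub]
    · exact integrable_condExp.bdd_mul (hfs.mono hmA).aestronglyMeasurable
        (Filter.Eventually.of_forall hfM)
    · exact hfi.mul_const c
  set A : Set Ω := {ω | 0 ≤ h ω} with hA
  have hAm : MeasurableSet[mA] A := hhs.measurable measurableSet_Ici
  have hA0 : MeasurableSet[m0] A := hmA _ hAm
  have hintA : ∫ ω in A, h ω ∂μ = (∫ ω in A, g ω ∂μ) - (μ A).toReal * c := by
    simp only [hh]
    rw [integral_sub integrable_condExp.integrableOn (integrable_const c).integrableOn,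
      setIntegral_condExp hmA hg hAm]
    simp [Measure.real]
  have hint0 : ∫ ω, h ω ∂μ = 0 := by
    simp only [hh]
    rw [integral_sub integrable_condExp (integrable_const c), integral_condExp hmA]
    simp [hc]
  have habs : ∫ ω, |h ω| ∂μ = 2 * ∫ ω in A, h ω ∂μ := by
    have e : ∀ ω, |h ω| = 2 * A.indicator h ω - h ω := by
      intro ω
      by_cases hω : 0 ≤ h ω
      · rw [Set.indicator_of_mem (show ω ∈ A from hω), abs_of_nonneg hω]; ring
      · rw [Set.indicator_of_notMem (show ω ∉ A from hω), abs_of_neg (not_le.mp hω)]; ring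
    simp_rw [e]
    rw [integral_sub ((hhi.indicator hA0).const_mul 2) hhi, hint0, integral_const_mul,
      integral_indicator hA0, sub_zero]
  refine ⟨A, hAm, ?_⟩
  have hM : 0 ≤ M := by
    obtain ⟨ω⟩ : Nonempty Ω := nonempty_of_isProbabilityMeasure μ
    exact (abs_nonneg _).trans (hfM ω)
  rw [hcov, ← hintA]
  calc |∫ ω, f ω * h ω ∂μ| ≤ ∫ ω, M * |h ω| ∂μ := by
        rw [← Real.norm_eq_abs]
        refine norm_integral_le_of_norm_le (hhi.abs.const_mul M)
          (Filter.Eventually.of_forall fun ω => ?_)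
        rw [Real.norm_eq_abs, abs_mul]
        exact mul_le_mul_of_nonneg_right (hfM ω) (abs_nonneg _)
    _ = 2 * M * ∫ ω in A, h ω ∂μ := by rw [integral_const_mul, habs]; ring
    _ ≤ _ := mul_le_mul_of_nonneg_left (le_abs_self _) (by positivity)

/-- The strong mixing covariance inequality for bounded functions. -/
lemma abs_cov_le_of_bounded {Ω : Type*} {m0 : MeasurableSpace Ω} (μ : Measure Ω)
    [IsProbabilityMeasure μ] (mA mB : MeasurableSpace Ω) (hmA : mA ≤ m0) (hmB : mB ≤ m0) (α : ℝ)
    (hα : ∀ A B : Set Ω, MeasurableSet[mA] A → MeasurableSet[mB] B →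
      |(μ (A ∩ B)).toReal - (μ A).toReal * (μ B).toReal| ≤ α)
    (f g : Ω → ℝ) (M N : ℝ) (hM : 0 ≤ M) (hN : 0 ≤ N)
    (hf : Measurable[mA] f) (hg : Measurable[mB] g)
    (hfM : ∀ ω, |f ω| ≤ M) (hgN : ∀ ω, |g ω| ≤ N) :
    |(∫ ω, f ω * g ω ∂μ) - (∫ ω, f ω ∂μ) * ∫ ω, g ω ∂μ| ≤ 4 * (M * N * α) := by
  have hgi : Integrable g μ :=
    Integrable.of_bound (hg.mono hmB le_rfl).aestronglyMeasurable N
      (Filter.Eventually.of_forall hgN)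
  obtain ⟨A, hA, h1⟩ := exists_abs_cov_le μ mA hmA f g M hf hfM hgi
  have hA0 : MeasurableSet[m0] A := hmA _ hA
  obtain ⟨B, hB, h2⟩ := exists_abs_cov_le μ mB hmB g (A.indicator fun _ => (1 : ℝ)) N hg hgN
    ((integrable_const (1 : ℝ)).indicator hA0)
  have hB0 : MeasurableSet[m0] B := hmB _ hB
  have e1 : ∫ ω, g ω * A.indicator (fun _ => (1 : ℝ)) ω ∂μ = ∫ ω in A, g ω ∂μ := by
    rw [← integral_indicator hA0]
    congr 1
    ext ω
    by_cases hω : ω ∈ A <;> simp [hω]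
  have e2 : ∫ ω, A.indicator (fun _ => (1 : ℝ)) ω ∂μ = (μ A).toReal := by
    rw [integral_indicator hA0]; simp [Measure.real]
  have e3 : ∫ ω in B, A.indicator (fun _ => (1 : ℝ)) ω ∂μ = (μ (A ∩ B)).toReal := by
    rw [integral_indicator hA0]; simp [Measure.real, Measure.restrict_apply hA0]
  rw [e1, e2, e3, mul_comm (∫ ω, g ω ∂μ), mul_comm (μ B).toReal] at h2
  calc _ ≤ _ := h1
    _ ≤ 2 * M * (2 * N * α) := by
        refine mul_le_mul_of_nonneg_left (h2.trans ?_) (by positivity)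
        exact mul_le_mul_of_nonneg_left (hα A B hA hB) (by positivity)
    _ = _ := by ring

/-- With `t = α (a ^ p + b ^ q) ≥ 1`, both `a ≤ (t / α) ^ (1 / p)` and `b ≤ (t / α) ^ (1 / q)`, and
`t ^ (1 / p + 1 / q) ≤ t` because the exponent is below `1`. -/
lemma mul_le_of_large {p q α a b : ℝ} (hp : 1 < p) (hq : 1 < q) (hpq : 1 / p + 1 / q < 1)
    (hα : 0 < α) (ha : 0 ≤ a) (hb : 0 ≤ b) (h : 1 < α * a ^ p ∨ 1 < α * b ^ q) :
    a * b ≤ α ^ (1 - 1 / p - 1 / q) * (a ^ p + b ^ q) := by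
  have hap : 0 ≤ a ^ p := Real.rpow_nonneg ha p
  have hbq : 0 ≤ b ^ q := Real.rpow_nonneg hb q
  set S := a ^ p + b ^ q with hS
  have hS0 : 0 ≤ S := add_nonneg hap hbq
  have ht : 1 ≤ α * S := by
    rw [hS, mul_add]
    have := mul_nonneg hα.le hap
    have := mul_nonneg hα.le hbq
    rcases h with h | h <;> linarith
  have hSpos : 0 < S := pos_of_mul_pos_right (by linarith) hα.le
  have haS : a ≤ S ^ (1 / p) := by
    rw [one_div, Real.le_rpow_inv_iff_of_pos ha hS0 (by linarith)]; linarith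
  have hbS : b ≤ S ^ (1 / q) := by
    rw [one_div, Real.le_rpow_inv_iff_of_pos hb hS0 (by linarith)]; linarith
  have hle : (α * S) ^ (1 / p + 1 / q) ≤ α * S := by
    simpa using Real.rpow_le_rpow_of_exponent_le ht hpq.le
  calc a * b ≤ S ^ (1 / p) * S ^ (1 / q) := mul_le_mul haS hbS hb (by positivity)
    _ = α ^ (-(1 / p + 1 / q)) * (α * S) ^ (1 / p + 1 / q) := by
        rw [← Real.rpow_add hSpos, Real.mul_rpow hα.le hS0, ← mul_assoc, ← Real.rpow_add hα]
        simp
    _ ≤ α ^ (-(1 / p + 1 / q)) * (α * S) := mul_le_mul_of_nonneg_left hle (by positivity)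
    _ = _ := by
        rw [← mul_assoc]
        congr 1
        nth_rewrite 2 [← Real.rpow_one α]
        rw [← Real.rpow_add hα]
        congr 1
        ring

/-- Truncation to zero of the values `x` with `α |x| ^ p > 1`, that is, `|x| > α ^ (-1 / p)`. -/
noncomputable def trunc (α p x : ℝ) : ℝ := if α * |x| ^ p ≤ 1 then x else 0

lemma measurable_trunc (α p : ℝ) : Measurable (trunc α p) := by
  unfold trunc
  exact Measurable.ite (measurableSet_le (by fun_prop) measurable_const) measurable_id
    measurable_const

lemma abs_trunc_le {α p : ℝ} (hα : 0 < α) (hp : 1 < p) (x : ℝ) :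
    |trunc α p x| ≤ α ^ (-(1 / p)) := by
  unfold trunc
  split_ifs with h
  · rw [Real.rpow_neg hα.le, ← Real.inv_rpow hα.le, one_div,
      Real.le_rpow_inv_iff_of_pos (abs_nonneg x) (by positivity) (by linarith),
      ← one_div, le_div_iff₀ hα]
    linarith
  · rw [abs_zero]; positivity

lemma abs_mul_sub_trunc_le {p q α : ℝ} (hp : 1 < p) (hq : 1 < q) (hpq : 1 / p + 1 / q < 1)
    (hα : 0 < α) (x y : ℝ) :
    |x * y - trunc α p x * trunc α q y| ≤ α ^ (1 - 1 / p - 1 / q) * (|x| ^ p + |y| ^ q) := by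
  by_cases h : 1 < α * |x| ^ p ∨ 1 < α * |y| ^ q
  · have e : trunc α p x * trunc α q y = 0 := by
      rcases h with h | h <;> simp [trunc, not_le.mpr h]
    rw [e, sub_zero, abs_mul]
    exact mul_le_of_large hp hq hpq hα (abs_nonneg x) (abs_nonneg y) h
  · push Not at h
    simp only [trunc, h.1, h.2, if_true, sub_self, abs_zero]
    positivity

lemma abs_integral_mul_sub_trunc_le {X : Type*} {mX : MeasurableSpace X} (ν : Measure X)
    [IsProbabilityMeasure ν] {p q α : ℝ} (hp : 1 < p) (hq : 1 < q) (hpq : 1 / p + 1 / q < 1)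
    (hα : 0 < α) (u v : X → ℝ) (hu : Measurable u) (hv : Measurable v)
    (hup : Integrable (fun x => |u x| ^ p) ν) (hvq : Integrable (fun x => |v x| ^ q) ν)
    (hu1 : ∫ x, |u x| ^ p ∂ν = 1) (hv1 : ∫ x, |v x| ^ q ∂ν = 1) :
    |(∫ x, u x * v x ∂ν) - ∫ x, trunc α p (u x) * trunc α q (v x) ∂ν| ≤
      2 * α ^ (1 - 1 / p - 1 / q) := by
  set θ := α ^ (1 - 1 / p - 1 / q) with hθ
  have hT : Integrable (fun x => trunc α p (u x) * trunc α q (v x)) ν := by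
    refine Integrable.of_bound (((measurable_trunc α p).comp hu).mul
      ((measurable_trunc α q).comp hv)).aestronglyMeasurable (α ^ (-(1 / p)) * α ^ (-(1 / q)))
      (Filter.Eventually.of_forall fun x => ?_)
    rw [Real.norm_eq_abs, abs_mul]
    exact mul_le_mul (abs_trunc_le hα hp _) (abs_trunc_le hα hq _) (abs_nonneg _) (by positivity)
  have hdom : Integrable (fun x => θ * (|u x| ^ p + |v x| ^ q)) ν := (hup.add hvq).const_mul θ
  have hle : ∀ x, ‖u x * v x - trunc α p (u x) * trunc α q (v x)‖ ≤
      θ * (|u x| ^ p + |v x| ^ q) := fun x => abs_mul_sub_trunc_le hp hq hpq hα (u x) (v x)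
  have hD : Integrable (fun x => u x * v x - trunc α p (u x) * trunc α q (v x)) ν :=
    hdom.mono' ((hu.mul hv).sub (((measurable_trunc α p).comp hu).mul
      ((measurable_trunc α q).comp hv))).aestronglyMeasurable (Filter.Eventually.of_forall hle)
  have huv : Integrable (fun x => u x * v x) ν :=
    (hD.add hT).congr (Filter.Eventually.of_forall fun x => by simp)
  rw [← integral_sub huv hT]
  refine (norm_integral_le_of_norm_le hdom (Filter.Eventually.of_forall hle)).trans ?_
  rw [integral_const_mul, integral_add hup hvq, hu1, hv1]
  linarith

/-- Truncating both functions changes their covariance by at most `4 α ^ (1 - 1 / p - 1 / q)`: the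
expectation of the product is an integral over `μ`, the product of the expectations one over
`μ.prod μ`, and each changes by at most half of this amount. -/
lemma abs_cov_sub_cov_trunc_le {Ω : Type*} {m0 : MeasurableSpace Ω} (μ : Measure Ω)
    [IsProbabilityMeasure μ] {p q α : ℝ} (hp : 1 < p) (hq : 1 < q) (hpq : 1 / p + 1 / q < 1)
    (hα : 0 < α) (f g : Ω → ℝ) (hf : Measurable f) (hg : Measurable g)
    (hfp : Integrable (fun ω => |f ω| ^ p) μ) (hgq : Integrable (fun ω => |g ω| ^ q) μ)
    (hf1 : ∫ ω, |f ω| ^ p ∂μ = 1) (hg1 : ∫ ω, |g ω| ^ q ∂μ = 1) :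
    |((∫ ω, f ω * g ω ∂μ) - (∫ ω, f ω ∂μ) * ∫ ω, g ω ∂μ) -
      ((∫ ω, trunc α p (f ω) * trunc α q (g ω) ∂μ) -
        (∫ ω, trunc α p (f ω) ∂μ) * ∫ ω, trunc α q (g ω) ∂μ)| ≤
      4 * α ^ (1 - 1 / p - 1 / q) := by
  have h1 := abs_integral_mul_sub_trunc_le μ hp hq hpq hα f g hf hg hfp hgq hf1 hg1
  have h2 := abs_integral_mul_sub_trunc_le (μ.prod μ) hp hq hpq hα
    (fun z => f z.1) (fun z => g z.2) (hf.comp measurable_fst) (hg.comp measurable_snd)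
    (hfp.comp_fst μ) (hgq.comp_snd μ)
    (by rw [integral_fun_fst (fun ω => |f ω| ^ p)]; simp [hf1])
    (by rw [integral_fun_snd (fun ω => |g ω| ^ q)]; simp [hg1])
  rw [integral_prod_mul f g,
    integral_prod_mul (fun ω => trunc α p (f ω)) (fun ω => trunc α q (g ω))] at h2
  rw [abs_le] at *
  constructor <;> linarith [h1.1, h1.2, h2.1, h2.2]

/-- The inequality, with constant `8`, for `α > 0` and normalised `f`, `g`. -/
lemma abs_cov_le_of_normalized
    {Ω : Type*} {m0 : MeasurableSpace Ω} (μ : Measure Ω) [IsProbabilityMeasure μ]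
    (mA mB : MeasurableSpace Ω) (hmA : mA ≤ m0) (hmB : mB ≤ m0)
    (α : ℝ) (hα0 : 0 < α)
    (hα : ∀ A B : Set Ω, MeasurableSet[mA] A → MeasurableSet[mB] B →
      |(μ (A ∩ B)).toReal - (μ A).toReal * (μ B).toReal| ≤ α)
    (p q : ℝ) (hp : 1 < p) (hq : 1 < q) (hpq : 1 / p + 1 / q < 1)
    (f g : Ω → ℝ) (hf : Measurable[mA] f) (hg : Measurable[mB] g)
    (hfp : Integrable (fun ω => |f ω| ^ p) μ) (hgq : Integrable (fun ω => |g ω| ^ q) μ)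
    (hf1 : ∫ ω, |f ω| ^ p ∂μ = 1) (hg1 : ∫ ω, |g ω| ^ q ∂μ = 1) :
    |(∫ ω, f ω * g ω ∂μ) - (∫ ω, f ω ∂μ) * ∫ ω, g ω ∂μ| ≤ 8 * α ^ (1 - 1 / p - 1 / q) := by
  have h := abs_cov_sub_cov_trunc_le μ hp hq hpq hα0 f g (hf.mono hmA le_rfl)
    (hg.mono hmB le_rfl) hfp hgq hf1 hg1
  have h3 := abs_cov_le_of_bounded μ mA mB hmA hmB α hα
    (fun ω => trunc α p (f ω)) (fun ω => trunc α q (g ω)) (α ^ (-(1 / p))) (α ^ (-(1 / q)))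
    (by positivity) (by positivity) ((measurable_trunc α p).comp hf) ((measurable_trunc α q).comp hg)
    (fun _ => abs_trunc_le hα0 hp _) (fun _ => abs_trunc_le hα0 hq _)
  have e : α ^ (-(1 / p)) * α ^ (-(1 / q)) * α = α ^ (1 - 1 / p - 1 / q) := by
    nth_rewrite 3 [← Real.rpow_one α]
    rw [← Real.rpow_add hα0, ← Real.rpow_add hα0]
    congr 1
    ring
  rw [e] at h3
  rw [abs_le] at *
  constructor <;> linarith [h.1, h.2, h3.1, h3.2]

lemma ae_eq_zero_of_integral_rpow_eq_zero {Ω : Type*} {m0 : MeasurableSpace Ω} {μ : Measure Ω}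
    {p : ℝ} (hp : 1 < p) {f : Ω → ℝ} (hfp : Integrable (fun ω => |f ω| ^ p) μ)
    (h : ∫ ω, |f ω| ^ p ∂μ = 0) : f =ᵐ[μ] 0 := by
  rw [integral_eq_zero_iff_of_nonneg (fun ω => by positivity) hfp] at h
  filter_upwards [h] with ω hω
  simpa using (Real.rpow_eq_zero (abs_nonneg _) (by linarith)).mp hω

lemma integral_rpow_normalize {Ω : Type*} {m0 : MeasurableSpace Ω} {μ : Measure Ω}
    {p : ℝ} (hp : 1 < p) {f : Ω → ℝ} (h : 0 < ∫ ω, |f ω| ^ p ∂μ) :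
    ∀ ω, |f ω / (∫ ω, |f ω| ^ p ∂μ) ^ (1 / p)| ^ p = |f ω| ^ p / ∫ ω, |f ω| ^ p ∂μ := by
  intro ω
  rw [abs_div, abs_of_nonneg (by positivity : 0 ≤ (∫ ω, |f ω| ^ p ∂μ) ^ (1 / p)),
    Real.div_rpow (abs_nonneg _) (by positivity), ← Real.rpow_mul h.le,
    one_div_mul_cancel (by linarith), Real.rpow_one]

lemma abs_cov_le_of_pos
    {Ω : Type*} {m0 : MeasurableSpace Ω} (μ : Measure Ω) [IsProbabilityMeasure μ]
    (mA mB : MeasurableSpace Ω) (hmA : mA ≤ m0) (hmB : mB ≤ m0)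
    (α : ℝ) (hα0 : 0 < α)
    (hα : ∀ A B : Set Ω, MeasurableSet[mA] A → MeasurableSet[mB] B →
      |(μ (A ∩ B)).toReal - (μ A).toReal * (μ B).toReal| ≤ α)
    (p q : ℝ) (hp : 1 < p) (hq : 1 < q) (hpq : 1 / p + 1 / q < 1)
    (f g : Ω → ℝ) (hf : Measurable[mA] f) (hg : Measurable[mB] g)
    (hfp : Integrable (fun ω => |f ω| ^ p) μ)
    (hgq : Integrable (fun ω => |g ω| ^ q) μ) :
    |(∫ ω, f ω * g ω ∂μ) - (∫ ω, f ω ∂μ) * ∫ ω, g ω ∂μ| ≤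
      12 * (∫ ω, |f ω| ^ p ∂μ) ^ (1 / p) * (∫ ω, |g ω| ^ q ∂μ) ^ (1 / q) *
        α ^ (1 - 1 / p - 1 / q) := by
  have hF0 : 0 ≤ ∫ ω, |f ω| ^ p ∂μ := integral_nonneg fun ω => by positivity
  have hG0 : 0 ≤ ∫ ω, |g ω| ^ q ∂μ := integral_nonneg fun ω => by positivity
  have hR : 0 ≤ 12 * (∫ ω, |f ω| ^ p ∂μ) ^ (1 / p) * (∫ ω, |g ω| ^ q ∂μ) ^ (1 / q) *
        α ^ (1 - 1 / p - 1 / q) := by positivity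
  rcases hF0.eq_or_lt with hF | hF
  · have hz := ae_eq_zero_of_integral_rpow_eq_zero hp hfp hF.symm
    have e1 : ∫ ω, f ω ∂μ = 0 := integral_eq_zero_of_ae hz
    have e2 : ∫ ω, f ω * g ω ∂μ = 0 := integral_eq_zero_of_ae (by
      filter_upwards [hz] with ω hω; simp [hω])
    rw [e1, e2]; simpa using hR
  rcases hG0.eq_or_lt with hG | hG
  · have hz := ae_eq_zero_of_integral_rpow_eq_zero hq hgq hG.symm
    have e1 : ∫ ω, g ω ∂μ = 0 := integral_eq_zero_of_ae hz
    have e2 : ∫ ω, f ω * g ω ∂μ = 0 := integral_eq_zero_of_ae (by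
      filter_upwards [hz] with ω hω; simp [hω])
    rw [e1, e2]; simpa using hR
  have hfn := integral_rpow_normalize hp hF
  have hgn := integral_rpow_normalize hq hG
  set a := (∫ ω, |f ω| ^ p ∂μ) ^ (1 / p) with ha
  set b := (∫ ω, |g ω| ^ q ∂μ) ^ (1 / q) with hb
  have ha0 : 0 < a := Real.rpow_pos_of_pos hF _
  have hb0 : 0 < b := Real.rpow_pos_of_pos hG _
  have key := abs_cov_le_of_normalized μ mA mB hmA hmB α hα0 hα p q hp hq hpq
    (fun ω => f ω / a) (fun ω => g ω / b) (hf.div_const a) (hg.div_const b)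
    (by simp_rw [hfn]; exact hfp.div_const _) (by simp_rw [hgn]; exact hgq.div_const _)
    (by simp_rw [hfn]; rw [integral_div, div_self hF.ne'])
    (by simp_rw [hgn]; rw [integral_div, div_self hG.ne'])
  simp_rw [div_mul_div_comm, integral_div] at key
  rw [div_mul_div_comm, ← sub_div, abs_div, abs_of_pos (mul_pos ha0 hb0),
    div_le_iff₀ (mul_pos ha0 hb0)] at key
  have : 0 ≤ a * b * α ^ (1 - 1 / p - 1 / q) := by positivity
  linarith

/-- Davydov's covariance inequality (Corollary 3.3 of the paper): if `f ∈ Lᵖ`, `g ∈ L^q`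
with `1/p + 1/q < 1`, then the covariance is bounded by
`12 ‖f‖_p ‖g‖_q α^(1-1/p-1/q)`, where `α` is the strong mixing coefficient. -/
theorem davydov_covariance_inequality
    {Ω : Type*} {m0 : MeasurableSpace Ω} (μ : Measure Ω) [IsProbabilityMeasure μ]
    (mA mB : MeasurableSpace Ω) (hmA : mA ≤ m0) (hmB : mB ≤ m0)
    (α : ℝ) (hα0 : 0 ≤ α)
    (hα : ∀ A B : Set Ω, MeasurableSet[mA] A → MeasurableSet[mB] B →
      |(μ (A ∩ B)).toReal - (μ A).toReal * (μ B).toReal| ≤ α)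
    (p q : ℝ) (hp : 1 < p) (hq : 1 < q) (hpq : 1 / p + 1 / q < 1)
    (f g : Ω → ℝ) (hf : Measurable[mA] f) (hg : Measurable[mB] g)
    (hfp : Integrable (fun ω => |f ω| ^ p) μ)
    (hgq : Integrable (fun ω => |g ω| ^ q) μ) :
    |(∫ ω, f ω * g ω ∂μ) - (∫ ω, f ω ∂μ) * ∫ ω, g ω ∂μ| ≤
      12 * (∫ ω, |f ω| ^ p ∂μ) ^ (1 / p) * (∫ ω, |g ω| ^ q ∂μ) ^ (1 / q) *
        α ^ (1 - 1 / p - 1 / q) := by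
  -- The bound at `α + ε` is continuous in `ε`, because the exponent of `α` is positive.
  have hs : 0 ≤ 1 - 1 / p - 1 / q := by linarith
  refine ge_of_tendsto (x := nhdsWithin 0 (Set.Ioi (0 : ℝ)))
    (f := fun ε => 12 * (∫ ω, |f ω| ^ p ∂μ) ^ (1 / p) * (∫ ω, |g ω| ^ q ∂μ) ^ (1 / q) *
        (α + ε) ^ (1 - 1 / p - 1 / q)) ?_ ?_
  · have hc : Continuous fun ε : ℝ => 12 * (∫ ω, |f ω| ^ p ∂μ) ^ (1 / p) *
        (∫ ω, |g ω| ^ q ∂μ) ^ (1 / q) * (α + ε) ^ (1 - 1 / p - 1 / q) :=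
      continuous_const.mul ((Real.continuous_rpow_const hs).comp
        (continuous_const.add continuous_id))
    simpa using (hc.tendsto 0).mono_left nhdsWithin_le_nhds
  · filter_upwards [self_mem_nhdsWithin] with ε hε
    have hε0 : 0 < ε := hε
    exact abs_cov_le_of_pos μ mA mB hmA hmB (α + ε) (by linarith)
      (fun A B hA hB => (hα A B hA hB).trans (by linarith)) p q hp hq hpq f g hf hg hfp hgq
end
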